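/- Let m ≥ 1 and let f, Ω be axially symmetric functions, with f three times and Ω once continuously differentiable on a neighborhood of the closure of D_m, satisfying ∂_r² f + (3/r) ∂_r f + ∂_{x₃}² f = ∂_{x₃} Ω in D_m, with f = 0 on ∂^V D_m, ∂_{x₃} f = 0 on ∂^H D_m and on ∂^V D_m, and Ω = 0 on ∂D_m. Then (∫_{D_m} |∇f|² dx)^{1/2} ≤ (∫_{D_m} Ω² dx)^{1/2} and (∫_{D_m} |∇ ∂_{x₃} f|² dx)^{1/2} ≤ (∫_{D_m} |∂_{x₃} Ω|² dx)^{1/2}. -/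

import Mathlib

noncomputable section

open Real MeasureTheory Set

/-- Inner radius of the `j`-th rectangle: `r_j = 2^(-j)`. -/
def rW (j : ℕ) : ℝ := (2 : ℝ) ^ (-(j : ℝ))

/-- Height of the `j`-th rectangle: `h_j = 2^(-β (j-1))`. -/
def hH (β : ℝ) (j : ℕ) : ℝ := (2 : ℝ) ^ (-β * ((j : ℝ) - 1))

/-- The rectangle `S_j` in the `(r, x₃)` cross-section. -/
def Srect (β : ℝ) (j : ℕ) : Set (ℝ × ℝ) :=
  {p : ℝ × ℝ | rW j ≤ p.1 ∧ p.1 < rW (j - 1) ∧ 0 < p.2 ∧ p.2 < hH β j}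

/-- The `(r, x₃)` cross-section of the domain `D_m`. -/
def Ddom (β : ℝ) (m : ℕ) : Set (ℝ × ℝ) := ⋃ j ∈ Finset.Icc 1 m, Srect β j

/-- The horizontal part `∂^H D_m` of the boundary of `D_m` (where `x₃` is locally constant). -/
def bdH (β : ℝ) (m : ℕ) : Set (ℝ × ℝ) :=
  {p : ℝ × ℝ | p.2 = 0 ∧ rW m ≤ p.1 ∧ p.1 ≤ 1} ∪
    ⋃ j ∈ Finset.Icc 1 m,
      {p : ℝ × ℝ | p.2 = hH β j ∧ rW j ≤ p.1 ∧ p.1 ≤ rW (j - 1)}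

/-- The vertical part `∂^V D_m` of the boundary of `D_m` (where `r` is locally constant). -/
def bdV (β : ℝ) (m : ℕ) : Set (ℝ × ℝ) :=
  {p : ℝ × ℝ | p.1 = 1 ∧ 0 ≤ p.2 ∧ p.2 ≤ 1} ∪
    {p : ℝ × ℝ | p.1 = rW m ∧ 0 ≤ p.2 ∧ p.2 ≤ hH β m} ∪
    ⋃ j ∈ Finset.Icc 1 (m - 1),
      {p : ℝ × ℝ | p.1 = rW j ∧ hH β (j + 1) ≤ p.2 ∧ p.2 ≤ hH β j}

/-- The full boundary `∂ D_m` of `D_m`. -/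
def bdD (β : ℝ) (m : ℕ) : Set (ℝ × ℝ) := bdH β m ∪ bdV β m

/-- The corner points of the polygonal cross-section of `D_m`
(i.e. the corner circles of the 3D domain). -/
def cornerSet (β : ℝ) (m : ℕ) : Set (ℝ × ℝ) :=
  ({(rW m, 0), ((1 : ℝ), 0), ((1 : ℝ), (1 : ℝ)), (rW m, hH β m)} : Set (ℝ × ℝ)) ∪
    ⋃ j ∈ Finset.Icc 1 (m - 1),
      ({(rW j, hH β j), (rW j, hH β (j + 1))} : Set (ℝ × ℝ))

/-- Radial partial derivative `∂_r`. -/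
def pdr (F : ℝ × ℝ → ℝ) (p : ℝ × ℝ) : ℝ := deriv (fun r => F (r, p.2)) p.1

/-- Vertical partial derivative `∂_{x₃}`. -/
def pdz (F : ℝ × ℝ → ℝ) (p : ℝ × ℝ) : ℝ := deriv (fun z => F (p.1, z)) p.2

/-- The axially symmetric Laplacian `Δ = ∂_r² + (1/r) ∂_r + ∂_{x₃}²`. -/
def cylLap (F : ℝ × ℝ → ℝ) (p : ℝ × ℝ) : ℝ :=
  pdr (pdr F) p + (1 / p.1) * pdr F p + pdz (pdz F) p

/-- The integral of an axially symmetric function over the 3-dimensional domain `D_m`,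
computed in the cross-section: `∫_{D_m} f dx = 2π ∬ F r dr dx₃`. -/
def cylIntegral (β : ℝ) (m : ℕ) (F : ℝ × ℝ → ℝ) : ℝ :=
  ∫ p in Ddom β m, F p * (2 * π * p.1)

/-- The vertical cross-section segment `D_m ∩ {r = c}` of the cross-section. -/
def vertSeg (β : ℝ) (m : ℕ) (c : ℝ) : Set ℝ := {z : ℝ | (c, z) ∈ Ddom β m}
lemma rW_zero : rW 0 = 1 := by simp [rW]
lemma rW_pos (j : ℕ) : 0 < rW j := by unfold rW; positivity
lemma rW_anti {i j : ℕ} (h : i ≤ j) : rW j ≤ rW i := by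
  unfold rW
  apply Real.rpow_le_rpow_of_exponent_le (by norm_num)
  have : (i : ℝ) ≤ j := by exact_mod_cast h
  linarith
lemma hH_one (β : ℝ) : hH β 1 = 1 := by simp [hH]
lemma hH_pos (β : ℝ) (j : ℕ) : 0 < hH β j := by unfold hH; positivity
lemma hH_anti {β : ℝ} (hβ : 1 < β) (j : ℕ) : hH β (j + 1) ≤ hH β j := by
  unfold hH
  apply Real.rpow_le_rpow_of_exponent_le (by norm_num)
  push_cast
  nlinarith
lemma rW_lt (j : ℕ) : rW (j + 1) < rW j := by
  unfold rW
  apply Real.rpow_lt_rpow_of_exponent_lt (by norm_num)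
  push_cast; linarith

lemma Srect_eq (β : ℝ) (j : ℕ) :
    Srect β j = Ico (rW j) (rW (j - 1)) ×ˢ Ioo 0 (hH β j) := by
  ext p; simp [Srect, mem_prod, and_assoc]

lemma Srect_sub {β : ℝ} {m j : ℕ} (h1 : 1 ≤ j) (h2 : j ≤ m) : Srect β j ⊆ Ddom β m := by
  intro p hp
  simp only [Ddom, mem_iUnion]
  exact ⟨j, Finset.mem_Icc.2 ⟨h1, h2⟩, hp⟩

lemma rect_sub {β : ℝ} {m i : ℕ} (h2 : i < m) :
    Icc (rW (i + 1)) (rW i) ×ˢ Icc 0 (hH β (i + 1)) ⊆ closure (Ddom β m) := by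
  refine subset_trans ?_ (closure_mono (Srect_sub (β := β) (j := i + 1) (by omega) h2))
  rw [Srect_eq, closure_prod_eq, Nat.add_sub_cancel, closure_Ico (rW_lt i).ne,
    closure_Ioo (hH_pos β _).ne]

lemma Ddom_meas (β : ℝ) (m : ℕ) : MeasurableSet (Ddom β m) := by
  unfold Ddom
  refine Finset.measurableSet_biUnion _ fun j _ => ?_
  rw [Srect_eq]
  exact measurableSet_Ico.prod measurableSet_Ioo

lemma Ddom_bdd {β : ℝ} (m : ℕ) : Bornology.IsBounded (Ddom β m) := by
  unfold Ddom
  rw [Bornology.isBounded_biUnion_finset]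
  intro j _
  rw [Srect_eq]
  exact (Metric.isBounded_Ico _ _).prod (Metric.isBounded_Ioo _ _)

lemma intOn {β : ℝ} {m : ℕ} {U : Set (ℝ × ℝ)} (hU : closure (Ddom β m) ⊆ U) {F : ℝ × ℝ → ℝ}
    (hF : ContinuousOn F U) : IntegrableOn F (Ddom β m) :=
  ((hF.mono hU).integrableOn_compact (Ddom_bdd m).isCompact_closure).mono_set subset_closure

lemma Ddom_pos {β : ℝ} {m : ℕ} {p : ℝ × ℝ} (hp : p ∈ Ddom β m) : 0 < p.1 := by
  simp only [Ddom, mem_iUnion] at hp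
  obtain ⟨j, _, hp⟩ := hp
  exact (rW_pos j).trans_le hp.1

lemma int_Ddom {β : ℝ} {m : ℕ} {F : ℝ × ℝ → ℝ} (hF : IntegrableOn F (Ddom β m)) :
    ∫ p in Ddom β m, F p = ∑ i ∈ Finset.range m, ∫ p in Srect β (i + 1), F p := by
  have e : Ddom β m = ⋃ i ∈ Finset.range m, Srect β (i + 1) := by
    ext p
    simp only [Ddom, mem_iUnion, Finset.mem_Icc, Finset.mem_range, exists_prop]
    constructor
    · rintro ⟨j, ⟨h1, h2⟩, h⟩
      exact ⟨j - 1, by omega, by rwa [Nat.sub_add_cancel h1]⟩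
    · rintro ⟨i, h1, h⟩
      exact ⟨i + 1, ⟨by omega, by omega⟩, h⟩
  rw [e]
  refine integral_biUnion_finset _ ?_ ?_ ?_
  · intro i _
    rw [Srect_eq]
    exact measurableSet_Ico.prod measurableSet_Ioo
  · have key : ∀ i j : ℕ, i < j → Disjoint (Srect β (i + 1)) (Srect β (j + 1)) := by
      intro i j hij
      rw [Set.disjoint_left]
      intro p hp hq
      have h1 := hp.1
      have h2 := hq.2.1
      rw [Nat.add_sub_cancel] at h2
      have := rW_anti (show i + 1 ≤ j from hij)
      linarith
    intro i _ j _ hij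
    rcases lt_or_gt_of_ne hij with h | h
    · exact key i j h
    · exact (key j i h).symm
  · intro i hi
    exact hF.mono_set (Srect_sub (by omega) (by simpa using hi))

/-! regularity -/

lemma pdr_eq {U : Set (ℝ × ℝ)} {F : ℝ × ℝ → ℝ} {p : ℝ × ℝ} (hF : DifferentiableAt ℝ F p) :
    HasDerivAt (fun r => F (r, p.2)) (fderiv ℝ F p (1, 0)) p.1 := by
  have h1 : HasFDerivAt F (fderiv ℝ F p) (p.1, p.2) := hF.hasFDerivAt
  have h2 : HasDerivAt (fun r : ℝ => (r, p.2)) ((1 : ℝ), (0 : ℝ)) p.1 :=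
    (hasDerivAt_id p.1).prodMk (hasDerivAt_const p.1 p.2)
  exact h1.comp_hasDerivAt p.1 h2

lemma pdz_eq {U : Set (ℝ × ℝ)} {F : ℝ × ℝ → ℝ} {p : ℝ × ℝ} (hF : DifferentiableAt ℝ F p) :
    HasDerivAt (fun z => F (p.1, z)) (fderiv ℝ F p (0, 1)) p.2 := by
  have h1 : HasFDerivAt F (fderiv ℝ F p) (p.1, p.2) := hF.hasFDerivAt
  have h2 : HasDerivAt (fun z : ℝ => (p.1, z)) ((0 : ℝ), (1 : ℝ)) p.2 :=
    (hasDerivAt_const p.2 p.1).prodMk (hasDerivAt_id p.2)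
  exact h1.comp_hasDerivAt p.2 h2

lemma diffAt {U : Set (ℝ × ℝ)} (hU : IsOpen U) {F : ℝ × ℝ → ℝ} {n : WithTop ℕ∞}
    (hF : ContDiffOn ℝ n F U) (hn : n ≠ 0) {p : ℝ × ℝ} (hp : p ∈ U) : DifferentiableAt ℝ F p :=
  (hF.contDiffAt (hU.mem_nhds hp)).differentiableAt hn

lemma hasR {U : Set (ℝ × ℝ)} (hU : IsOpen U) {F : ℝ × ℝ → ℝ} {n : WithTop ℕ∞}
    (hF : ContDiffOn ℝ n F U) (hn : n ≠ 0) {p : ℝ × ℝ} (hp : p ∈ U) :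
    HasDerivAt (fun r => F (r, p.2)) (pdr F p) p.1 :=
  (pdr_eq (U := U) (diffAt hU hF hn hp)).differentiableAt.hasDerivAt

lemma hasZ {U : Set (ℝ × ℝ)} (hU : IsOpen U) {F : ℝ × ℝ → ℝ} {n : WithTop ℕ∞}
    (hF : ContDiffOn ℝ n F U) (hn : n ≠ 0) {p : ℝ × ℝ} (hp : p ∈ U) :
    HasDerivAt (fun z => F (p.1, z)) (pdz F p) p.2 :=
  (pdz_eq (U := U) (diffAt hU hF hn hp)).differentiableAt.hasDerivAt

lemma pdr_f {U : Set (ℝ × ℝ)} (hU : IsOpen U) {F : ℝ × ℝ → ℝ} {n : WithTop ℕ∞}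
    (hF : ContDiffOn ℝ n F U) (hn : n ≠ 0) {p : ℝ × ℝ} (hp : p ∈ U) :
    pdr F p = fderiv ℝ F p (1, 0) :=
  (pdr_eq (U := U) (diffAt hU hF hn hp)).deriv

lemma pdz_f {U : Set (ℝ × ℝ)} (hU : IsOpen U) {F : ℝ × ℝ → ℝ} {n : WithTop ℕ∞}
    (hF : ContDiffOn ℝ n F U) (hn : n ≠ 0) {p : ℝ × ℝ} (hp : p ∈ U) :
    pdz F p = fderiv ℝ F p (0, 1) :=
  (pdz_eq (U := U) (diffAt hU hF hn hp)).deriv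

lemma cdR {U : Set (ℝ × ℝ)} (hU : IsOpen U) {F : ℝ × ℝ → ℝ} {n k : WithTop ℕ∞}
    (hF : ContDiffOn ℝ n F U) (hn : k + 1 ≤ n) (hn0 : n ≠ 0) : ContDiffOn ℝ k (pdr F) U :=
  ((hF.fderiv_of_isOpen hU hn).clm_apply contDiffOn_const).congr
    fun _ hp => pdr_f hU hF hn0 hp

lemma cdZ {U : Set (ℝ × ℝ)} (hU : IsOpen U) {F : ℝ × ℝ → ℝ} {n k : WithTop ℕ∞}
    (hF : ContDiffOn ℝ n F U) (hn : k + 1 ≤ n) (hn0 : n ≠ 0) : ContDiffOn ℝ k (pdz F) U :=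
  ((hF.fderiv_of_isOpen hU hn).clm_apply contDiffOn_const).congr
    fun _ hp => pdz_f hU hF hn0 hp

lemma pd_comm {U : Set (ℝ × ℝ)} (hU : IsOpen U) {F : ℝ × ℝ → ℝ}
    (hF : ContDiffOn ℝ 2 F U) {p : ℝ × ℝ} (hp : p ∈ U) :
    pdz (pdr F) p = pdr (pdz F) p := by
  have h1 : (1 : WithTop ℕ∞) + 1 ≤ 2 := by norm_num
  have h0 : (2 : WithTop ℕ∞) ≠ 0 := by norm_num
  have hs : IsSymmSndFDerivAt ℝ F p :=
    (hF.contDiffAt (hU.mem_nhds hp)).isSymmSndFDerivAt (by simp)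
  have hd : DifferentiableAt ℝ (fderiv ℝ F) p :=
    ((hF.fderiv_of_isOpen hU h1).contDiffAt (hU.mem_nhds hp)).differentiableAt one_ne_zero
  have e1 : pdr F =ᶠ[nhds p] fun q => fderiv ℝ F q (1, 0) := by
    filter_upwards [hU.mem_nhds hp] with q hq using pdr_f hU hF h0 hq
  have e2 : pdz F =ᶠ[nhds p] fun q => fderiv ℝ F q (0, 1) := by
    filter_upwards [hU.mem_nhds hp] with q hq using pdz_f hU hF h0 hq
  rw [pdz_f hU (cdR hU hF h1 h0) one_ne_zero hp, pdr_f hU (cdZ hU hF h1 h0) one_ne_zero hp,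
    e1.fderiv_eq, e2.fderiv_eq, fderiv_clm_apply hd (by fun_prop), fderiv_clm_apply hd (by fun_prop)]
  simpa using hs (0, 1) (1, 0)

/-! rectangles -/

lemma rectR {P : ℝ × ℝ → ℝ} {U : Set (ℝ × ℝ)} (hU : IsOpen U) (hP : ContDiffOn ℝ 1 P U)
    {a b c d : ℝ} (hab : a ≤ b) (hcd : c ≤ d) (hs : Icc a b ×ˢ Icc c d ⊆ U) :
    ∫ p in Ico a b ×ˢ Ioo c d, pdr P p = ∫ z in c..d, (P (b, z) - P (a, z)) := by
  have hc : ContinuousOn (pdr P) U := (cdR (k := 0) hU hP (by simp) one_ne_zero).continuousOn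
  have hi : IntegrableOn (pdr P) (Ico a b ×ˢ Ioo c d) :=
    ((hc.mono hs).integrableOn_compact (isCompact_Icc.prod isCompact_Icc)).mono_set
      (prod_mono Ico_subset_Icc_self Ioo_subset_Icc_self)
  have hi' : Integrable (pdr P) ((volume.restrict (Ico a b)).prod (volume.restrict (Ioo c d))) := by
    rw [Measure.prod_restrict, ← Measure.volume_eq_prod]; exact hi
  rw [Measure.volume_eq_prod, ← Measure.prod_restrict, integral_prod_symm _ hi',
    intervalIntegral.integral_of_le hcd, integral_Ioc_eq_integral_Ioo]
  refine setIntegral_congr_fun measurableSet_Ioo fun z hz => ?_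
  rw [integral_Ico_eq_integral_Ioo, ← integral_Ioc_eq_integral_Ioo,
    ← intervalIntegral.integral_of_le hab]
  have hm : ∀ r ∈ uIcc a b, (r, z) ∈ U := fun r hr =>
    hs ⟨by rwa [uIcc_of_le hab] at hr, Ioo_subset_Icc_self hz⟩
  refine intervalIntegral.integral_eq_sub_of_hasDerivAt (f := fun r => P (r, z)) (fun r hr => ?_) ?_
  · exact hasR hU hP one_ne_zero (hm r hr)
  · refine ContinuousOn.intervalIntegrable ?_
    exact hc.comp (by fun_prop) hm

lemma rectZ {P : ℝ × ℝ → ℝ} {U : Set (ℝ × ℝ)} (hU : IsOpen U) (hP : ContDiffOn ℝ 1 P U)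
    {a b c d : ℝ} (hcd : c ≤ d) (hs : Icc a b ×ˢ Icc c d ⊆ U)
    (h0 : ∀ r ∈ Icc a b, P (r, c) = 0 ∧ P (r, d) = 0) :
    ∫ p in Ico a b ×ˢ Ioo c d, pdz P p = 0 := by
  have hc : ContinuousOn (pdz P) U := (cdZ (k := 0) hU hP (by simp) one_ne_zero).continuousOn
  have hi : IntegrableOn (pdz P) (Ico a b ×ˢ Ioo c d) :=
    ((hc.mono hs).integrableOn_compact (isCompact_Icc.prod isCompact_Icc)).mono_set
      (prod_mono Ico_subset_Icc_self Ioo_subset_Icc_self)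
  rw [Measure.volume_eq_prod] at hi ⊢
  rw [setIntegral_prod _ hi]
  refine setIntegral_eq_zero_of_forall_eq_zero fun r hr => ?_
  have hr' := Ico_subset_Icc_self hr
  rw [← integral_Ioc_eq_integral_Ioo, ← intervalIntegral.integral_of_le hcd]
  have hm : ∀ z ∈ uIcc c d, (r, z) ∈ U := fun z hz =>
    hs ⟨hr', by rwa [uIcc_of_le hcd] at hz⟩
  rw [intervalIntegral.integral_eq_sub_of_hasDerivAt (f := fun z => P (r, z))
    (fun z hz => hasZ hU hP one_ne_zero (hm z hz))
    (ContinuousOn.intervalIntegrable (hc.comp (by fun_prop) hm))]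
  rw [(h0 r hr').1, (h0 r hr').2, sub_zero]

lemma intZ {β : ℝ} {m : ℕ} {Q : ℝ × ℝ → ℝ} {U : Set (ℝ × ℝ)} (hU : IsOpen U)
    (hQ : ContDiffOn ℝ 1 Q U) (hD : closure (Ddom β m) ⊆ U) (h0 : ∀ p ∈ bdH β m, Q p = 0) :
    ∫ p in Ddom β m, pdz Q p = 0 := by
  have hc : ContinuousOn (pdz Q) U := (cdZ (k := 0) hU hQ (by simp) one_ne_zero).continuousOn
  rw [int_Ddom (intOn hD hc)]
  refine Finset.sum_eq_zero fun i hi => ?_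
  rw [Finset.mem_range] at hi
  rw [Srect_eq, Nat.add_sub_cancel]
  refine rectZ hU hQ (hH_pos β _).le ((rect_sub hi).trans hD) fun r hr => ⟨h0 _ ?_, h0 _ ?_⟩
  · left
    refine ⟨rfl, (rW_anti hi).trans hr.1, hr.2.trans ?_⟩
    rw [← rW_zero]; exact rW_anti (Nat.zero_le i)
  · right
    simp only [mem_iUnion, Finset.mem_Icc]
    exact ⟨i + 1, ⟨by omega, by omega⟩, rfl, hr⟩

lemma intR {β : ℝ} (hβ : 1 < β) {m : ℕ} (hm : 1 ≤ m) {P : ℝ × ℝ → ℝ} {U : Set (ℝ × ℝ)}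
    (hU : IsOpen U)
    (hP : ContDiffOn ℝ 1 P U) (hD : closure (Ddom β m) ⊆ U) (h0 : ∀ p ∈ bdV β m, P p = 0) :
    ∫ p in Ddom β m, pdr P p = 0 := by
  have hc : ContinuousOn (pdr P) U := (cdR (k := 0) hU hP (by simp) one_ne_zero).continuousOn
  have hPc := hP.continuousOn
  rw [int_Ddom (intOn hD hc)]
  have hii : ∀ i < m, ∀ r ∈ Icc (rW (i + 1)) (rW i), ∀ a ∈ Icc 0 (hH β (i + 1)),
      ∀ b ∈ Icc 0 (hH β (i + 1)),
      IntervalIntegrable (fun z => P (r, z)) volume a b := by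
    intro i hi r hr a ha b hb
    refine ContinuousOn.intervalIntegrable ?_
    refine hPc.comp (by fun_prop) fun z hz => hD (rect_sub hi ⟨hr, ?_⟩)
    exact ordConnected_Icc.uIcc_subset ha hb hz
  have hI : ∀ i < m, ∫ p in Srect β (i + 1), pdr P p =
      (∫ z in (0:ℝ)..hH β (i + 1), P (rW i, z)) - ∫ z in (0:ℝ)..hH β (i + 1), P (rW (i + 1), z) := by
    intro i hi
    have hh := (hH_pos β (i + 1)).le
    rw [Srect_eq, Nat.add_sub_cancel, rectR hU hP (rW_lt i).le hh ((rect_sub hi).trans hD)]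
    rw [intervalIntegral.integral_sub]
    · exact hii i hi _ (right_mem_Icc.2 (rW_lt i).le) _ (left_mem_Icc.2 hh) _ (right_mem_Icc.2 hh)
    · exact hii i hi _ (left_mem_Icc.2 (rW_lt i).le) _ (left_mem_Icc.2 hh) _ (right_mem_Icc.2 hh)
  have key : ∀ n, 1 ≤ n → n ≤ m → ∑ i ∈ Finset.range n, ∫ p in Srect β (i + 1), pdr P p =
      - ∫ z in (0:ℝ)..hH β n, P (rW n, z) := by
    intro n hn
    induction n, hn using Nat.le_induction with
    | base =>
      intro h
      rw [Finset.sum_range_one, hI 0 h]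
      have : ∫ z in (0:ℝ)..hH β (0 + 1), P (rW 0, z) = 0 := by
        rw [intervalIntegral.integral_congr (g := fun _ => 0)]
        · simp
        · intro z hz
          rw [uIcc_of_le (hH_pos β _).le, zero_add, hH_one] at hz
          exact h0 _ (Or.inl (Or.inl ⟨rW_zero, hz.1, hz.2⟩))
      rw [this, zero_sub]
    | succ n hn ih =>
      intro h
      rw [Finset.sum_range_succ, ih (by omega), hI n h]
      obtain ⟨k, rfl⟩ : ∃ k, n = k + 1 := ⟨n - 1, by omega⟩
      have ha := hH_anti hβ (k + 1)
      have hp := hH_pos β (k + 1 + 1)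
      have hr := left_mem_Icc.2 (rW_lt k).le
      have e := intervalIntegral.integral_add_adjacent_intervals
        (hii k (by omega) _ hr 0 ⟨le_rfl, by linarith⟩ (hH β (k + 1 + 1)) ⟨hp.le, ha⟩)
        (hii k (by omega) _ hr _ ⟨hp.le, ha⟩ (hH β (k + 1)) ⟨by linarith, le_rfl⟩)
      have : ∫ z in (hH β (k + 1 + 1))..hH β (k + 1), P (rW (k + 1), z) = 0 := by
        rw [intervalIntegral.integral_congr (g := fun _ => 0)]
        · simp
        · intro z hz
          rw [uIcc_of_le ha] at hz
          refine h0 _ (Or.inr ?_)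
          simp only [mem_iUnion, Finset.mem_Icc]
          exact ⟨k + 1, ⟨by omega, by omega⟩, rfl, hz⟩
      linarith
  rw [key m hm le_rfl, intervalIntegral.integral_congr (g := fun _ => 0)]
  · simp
  · intro z hz
    rw [uIcc_of_le (hH_pos β _).le] at hz
    exact h0 _ (Or.inl (Or.inr ⟨rfl, hz⟩))

/-- Final comparison step. -/
lemma finish {β : ℝ} {m : ℕ} {U : Set (ℝ × ℝ)} (hD : closure (Ddom β m) ⊆ U)
    {A B C R : ℝ × ℝ → ℝ} (hA : ContinuousOn A U) (hB : ContinuousOn B U) (hC : ContinuousOn C U)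
    (hR : ∀ p ∈ Ddom β m, R p = p.1 * (A p ^ 2 + B p ^ 2) - p.1 * (C p * B p))
    (h0 : ∫ p in Ddom β m, R p = 0) :
    (cylIntegral β m fun p => (A p) ^ 2 + (B p) ^ 2) ^ ((1 : ℝ) / 2) ≤
        (cylIntegral β m fun p => (C p) ^ 2) ^ ((1 : ℝ) / 2) := by
  have hpos : 0 ≤ cylIntegral β m fun p => (A p) ^ 2 + (B p) ^ 2 := by
    refine setIntegral_nonneg (Ddom_meas β m) fun p hp => ?_
    have := Ddom_pos hp
    positivity
  refine Real.rpow_le_rpow hpos ?_ (by norm_num)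
  rw [setIntegral_congr_fun (Ddom_meas β m) hR] at h0
  have i1 : IntegrableOn (fun p => p.1 * (A p ^ 2 + B p ^ 2) - p.1 * (C p * B p)) (Ddom β m) :=
    intOn hD (by fun_prop)
  have i2 : IntegrableOn (fun p => (A p ^ 2 + B p ^ 2) * (2 * π * p.1)) (Ddom β m) :=
    intOn hD (by fun_prop)
  have i3 : IntegrableOn (fun p => C p ^ 2 * (2 * π * p.1)) (Ddom β m) :=
    intOn hD (by fun_prop)
  have e : ∫ p in Ddom β m, ((A p ^ 2 + B p ^ 2) * (2 * π * p.1)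
      - (4 * π) * (p.1 * (A p ^ 2 + B p ^ 2) - p.1 * (C p * B p))) =
      cylIntegral β m fun p => (A p) ^ 2 + (B p) ^ 2 := by
    rw [integral_sub i2 (i1.const_mul _), integral_const_mul, h0, mul_zero, sub_zero]
    rfl
  rw [← e]
  refine setIntegral_mono_on (i2.sub (i1.const_mul _)) i3 (Ddom_meas β m) fun p hp => ?_
  have h1 := Ddom_pos hp
  have h2 : 0 ≤ (2 * π * p.1) * ((C p - B p) ^ 2 + A p ^ 2) := by positivity
  linarith [h2]

/-- Gradient bounds for the solution `f` of the elliptic equation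
`∂_r² f + (3/r) ∂_r f + ∂_{x₃}² f = ∂_{x₃} Ω` with the stated boundary conditions. -/
theorem grad_bounds_from_Omega (β : ℝ) (hβ : 1 < β) (hβ' : β ≤ 1.1)
    (m : ℕ) (hm : 1 ≤ m) (f Ω : ℝ × ℝ → ℝ)
    (hf : ∃ U : Set (ℝ × ℝ), IsOpen U ∧ closure (Ddom β m) ⊆ U ∧ ContDiffOn ℝ 3 f U)
    (hΩ : ∃ U : Set (ℝ × ℝ), IsOpen U ∧ closure (Ddom β m) ⊆ U ∧ ContDiffOn ℝ 1 Ω U)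
    (heq : ∀ p ∈ Ddom β m,
      pdr (pdr f) p + (3 / p.1) * pdr f p + pdz (pdz f) p = pdz Ω p)
    (hfV : ∀ p ∈ bdV β m, f p = 0)
    (hfz : ∀ p ∈ bdH β m ∪ bdV β m, pdz f p = 0)
    (hΩ0 : ∀ p ∈ bdD β m, Ω p = 0) :
    (cylIntegral β m fun p => (pdr f p) ^ 2 + (pdz f p) ^ 2) ^ ((1 : ℝ) / 2) ≤
        (cylIntegral β m fun p => (Ω p) ^ 2) ^ ((1 : ℝ) / 2) ∧
      (cylIntegral β m fun p => (pdr (pdz f) p) ^ 2 + (pdz (pdz f) p) ^ 2) ^ ((1 : ℝ) / 2) ≤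
        (cylIntegral β m fun p => (pdz Ω p) ^ 2) ^ ((1 : ℝ) / 2) := by
  obtain ⟨U₁, hU₁, hD₁, hf⟩ := hf
  obtain ⟨U₂, hU₂, hD₂, hΩ⟩ := hΩ
  obtain ⟨U, hU, hD, hf, hΩ⟩ : ∃ U : Set (ℝ × ℝ), IsOpen U ∧ closure (Ddom β m) ⊆ U ∧
      ContDiffOn ℝ 3 f U ∧ ContDiffOn ℝ 1 Ω U :=
    ⟨U₁ ∩ U₂, hU₁.inter hU₂, subset_inter hD₁ hD₂, hf.mono inter_subset_left,
      hΩ.mono inter_subset_right⟩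
  have n3 : (3 : WithTop ℕ∞) ≠ 0 := by norm_num
  have n2 : (2 : WithTop ℕ∞) ≠ 0 := by norm_num
  have n1 : (1 : WithTop ℕ∞) ≠ 0 := by norm_num
  have l3 : (2 : WithTop ℕ∞) + 1 ≤ 3 := by norm_num
  have l2 : (1 : WithTop ℕ∞) + 1 ≤ 2 := by norm_num
  have l1 : (0 : WithTop ℕ∞) + 1 ≤ 1 := by norm_num
  have hf2 : ContDiffOn ℝ 2 f U := hf.of_le (by norm_num)
  have hf1 : ContDiffOn ℝ 1 f U := hf.of_le (by norm_num)
  have fr := cdR hU hf l3 n3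
  have fz := cdZ hU hf l3 n3
  have fr1 : ContDiffOn ℝ 1 (pdr f) U := fr.of_le (by norm_num)
  have fz1 : ContDiffOn ℝ 1 (pdz f) U := fz.of_le (by norm_num)
  have frr := cdR hU fr l2 n2
  have fzz := cdZ hU fz l2 n2
  have fzr := cdR hU fz l2 n2
  have fzrr := cdR hU fzr l1 n1
  have Ωz := cdZ hU hΩ l1 n1
  have hfst : ContDiffOn ℝ 1 (fun p : ℝ × ℝ => p.1) U := contDiff_fst.contDiffOn
  constructor
  · have cP : ContDiffOn ℝ 1 (fun p => p.1 * pdr f p * f p + f p ^ 2) U :=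
      ((hfst.mul fr1).mul hf1).add (hf1.pow 2)
    have cQ : ContDiffOn ℝ 1 (fun p => p.1 * (f p * pdz f p - Ω p * f p)) U :=
      hfst.mul ((hf1.mul fz1).sub (hΩ.mul hf1))
    refine finish hD fr.continuousOn fz.continuousOn hΩ.continuousOn
      (R := fun p => pdr (fun p => p.1 * pdr f p * f p + f p ^ 2) p +
        pdz (fun p => p.1 * (f p * pdz f p - Ω p * f p)) p) (fun p hp => ?_) ?_
    · have hpU := hD (subset_closure hp)
      have hp0 := Ddom_pos hp
      have e1 : pdr (fun p => p.1 * pdr f p * f p + f p ^ 2) p = _ :=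
        ((((hasDerivAt_id p.1).mul (hasR hU fr n2 hpU)).mul (hasR hU hf n3 hpU)).add
          ((hasR hU hf n3 hpU).pow 2)).deriv
      have e2 : pdz (fun p => p.1 * (f p * pdz f p - Ω p * f p)) p = _ :=
        ((((hasZ hU hf n3 hpU).mul (hasZ hU fz n2 hpU)).sub
          ((hasZ hU hΩ n1 hpU).mul (hasZ hU hf n3 hpU))).const_mul p.1).deriv
      have h := heq p hp
      simp only [e1, e2, ← h]
      simp
      field_simp
      ring
    · rw [integral_add (intOn hD (cdR hU cP l1 n1).continuousOn)
        (intOn hD (cdZ hU cQ l1 n1).continuousOn), intR hβ hm hU cP hD, intZ hU cQ hD, add_zero]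
      · intro p hp
        simp only [hfz p (Or.inl hp), hΩ0 p (Or.inl hp)]; ring
      · intro p hp
        simp only [hfV p hp]; ring
  · have cP : ContDiffOn ℝ 1 (fun p => p.1 * pdr (pdz f) p * pdz f p + pdz f p ^ 2) U :=
      ((hfst.mul fzr).mul fz1).add (fz1.pow 2)
    have cQ : ContDiffOn ℝ 1 (fun p => pdz f p * (p.1 * pdr (pdr f) p + 3 * pdr f p)) U :=
      fz1.mul ((hfst.mul frr).add (contDiffOn_const.mul fr1))
    refine finish hD fzr.continuousOn fzz.continuousOn Ωz.continuousOn
      (R := fun p => pdr (fun p => p.1 * pdr (pdz f) p * pdz f p + pdz f p ^ 2) p -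
        pdz (fun p => pdz f p * (p.1 * pdr (pdr f) p + 3 * pdr f p)) p) (fun p hp => ?_) ?_
    · have hpU := hD (subset_closure hp)
      have hp0 := Ddom_pos hp
      have c1 : pdz (pdr f) p = pdr (pdz f) p := pd_comm hU hf2 hpU
      have c2 : pdz (pdr (pdr f)) p = pdr (pdr (pdz f)) p := by
        rw [pd_comm hU fr hpU]
        refine Filter.EventuallyEq.deriv_eq ?_
        have : Filter.Tendsto (fun r : ℝ => (r, p.2)) (nhds p.1) (nhds (p.1, p.2)) := by
          refine Continuous.tendsto (f := fun r : ℝ => (r, p.2)) (by fun_prop) p.1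
        filter_upwards [this (hU.mem_nhds hpU)] with r hr
        exact pd_comm hU hf2 hr
      have e1 : pdr (fun p => p.1 * pdr (pdz f) p * pdz f p + pdz f p ^ 2) p = _ :=
        ((((hasDerivAt_id p.1).mul (hasR hU fzr n1 hpU)).mul (hasR hU fz n2 hpU)).add
          ((hasR hU fz n2 hpU).pow 2)).deriv
      have e2 : pdz (fun p => pdz f p * (p.1 * pdr (pdr f) p + 3 * pdr f p)) p = _ :=
        ((hasZ hU fz n2 hpU).mul (((hasZ hU frr n1 hpU).const_mul p.1).add
          ((hasZ hU fr n2 hpU).const_mul 3))).deriv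
      have h := heq p hp
      simp only [e1, e2, c1, c2, ← h]
      simp
      field_simp
      ring
    · rw [integral_sub (intOn hD (cdR hU cP l1 n1).continuousOn)
        (intOn hD (cdZ hU cQ l1 n1).continuousOn), intR hβ hm hU cP hD, intZ hU cQ hD, sub_zero]
      · intro p hp
        simp only [hfz p (Or.inl hp)]; ring
      · intro p hp
        simp only [hfz p (Or.inr hp)]; ring
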